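/- arXiv:2412.20435 — 6 statements merged into one kernel-verified Lean document; each statement's English description precedes it below -/
import Mathlib

section
/- Let k be a field and let u₁, …, u₆ ∈ k be six pairwise distinct nonzero elements. Then there exists a nonzero quadratic form q(x, y, z) = αx² + βy² + γz² + δxy + εxz + ζyz with coefficients in k, not all zero, vanishing at all six points (uᵢ⁻², uᵢ⁻³, 1) for i = 1, …, 6, if and only if u₁ + u₂ + u₃ + u₄ + u₅ + u₆ = 0. Equivalently, the six points [uᵢ⁻² : uᵢ⁻³ : 1] of ℙ²(k) lie on a common conic if and only if the sum of the uᵢ is zero. -/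
/-!
The points `[v⁻² : v⁻³ : 1] = [v : 1 : v³]` parametrize the cuspidal cubic `x³ = y² z`. Restricting
quadratic forms to it identifies them with the polynomials in `v` of degree at most six without
quintic term. A nonzero polynomial of degree at most six with six distinct roots `uᵢ` is a nonzero
multiple of `∏ (X - uᵢ)`, whose quintic coefficient is `-∑ uᵢ`.
-/

section Vieta

open Polynomial Lagrange

variable {R ι : Type*} [CommRing R] [IsDomain R] {s : Finset ι} {u : ι → R}

theorem eq_C_coeff_card_mul_nodal {P : R[X]} (hu : Set.InjOn u s)
    (hdeg : P.natDegree ≤ s.card) (hroot : ∀ i ∈ s, P.eval (u i) = 0) :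
    P = C (P.coeff s.card) * nodal s u := by
  have hlead : (nodal s u).coeff s.card = 1 := by
    simpa only [natDegree_nodal] using (nodal_monic (s := s) (v := u)).coeff_natDegree
  refine eq_of_degree_sub_lt_of_eval_index_eq s hu ?_ fun i hi => ?_
  · refine (degree_lt_iff_coeff_zero _ _).2 fun m hm => ?_
    rw [coeff_sub, coeff_C_mul]
    rcases hm.eq_or_lt with rfl | hm
    · rw [hlead, mul_one, sub_self]
    · rw [coeff_eq_zero_of_natDegree_lt (hdeg.trans_lt hm),
        coeff_eq_zero_of_natDegree_lt (natDegree_nodal.trans_lt hm), mul_zero, sub_zero]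
  · rw [hroot i hi, eval_mul, eval_nodal_at_node hi, mul_zero]

theorem exists_ne_zero_coeff_card_pred_eq_zero_iff_sum_eq_zero (hu : Set.InjOn u s)
    (hs : s.Nonempty) :
    (∃ P : R[X], P ≠ 0 ∧ P.natDegree ≤ s.card ∧ P.coeff (s.card - 1) = 0 ∧
      ∀ i ∈ s, P.eval (u i) = 0) ↔ ∑ i ∈ s, u i = 0 := by
  have hvieta : (nodal s u).coeff (s.card - 1) = -∑ i ∈ s, u i :=
    prod_X_sub_C_coeff_card_pred s u hs.card_pos
  constructor
  · rintro ⟨P, hP, hdeg, hcoeff, hroot⟩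
    have hmul := eq_C_coeff_card_mul_nodal hu hdeg hroot
    have hlead : P.coeff s.card ≠ 0 := fun h => hP (by rw [hmul, h, C_0, zero_mul])
    rw [hmul, coeff_C_mul, hvieta, mul_neg, neg_eq_zero] at hcoeff
    exact (mul_eq_zero.1 hcoeff).resolve_left hlead
  · intro hsum
    exact ⟨nodal s u, nodal_ne_zero, natDegree_nodal.le, by rw [hvieta, hsum, neg_zero],
      fun i hi => eval_nodal_at_node hi⟩

end Vieta

section CuspidalSextic

open Polynomial

/-- The restriction of the quadratic form `α x² + β y² + γ z² + δ x y + ε x z + ζ y z` to the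
cuspidal cubic, parametrized by `[X : 1 : X³]`. -/
noncomputable def cuspidalSextic {R : Type*} [Semiring R] (α β γ δ ε ζ : R) : R[X] :=
  C γ * X ^ 6 + C ε * X ^ 4 + C ζ * X ^ 3 + C α * X ^ 2 + C δ * X + C β

section Semiring

variable {R : Type*} [Semiring R] (α β γ δ ε ζ : R)

theorem natDegree_cuspidalSextic_le : (cuspidalSextic α β γ δ ε ζ).natDegree ≤ 6 := by
  unfold cuspidalSextic
  compute_degree

theorem coeff_five_cuspidalSextic : (cuspidalSextic α β γ δ ε ζ).coeff 5 = 0 := by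
  simp [cuspidalSextic]

variable {α β γ δ ε ζ} in
theorem cuspidalSextic_eq_zero_iff :
    cuspidalSextic α β γ δ ε ζ = 0 ↔
      α = 0 ∧ β = 0 ∧ γ = 0 ∧ δ = 0 ∧ ε = 0 ∧ ζ = 0 := by
  constructor
  · intro h
    have hcoeff (n : ℕ) : (cuspidalSextic α β γ δ ε ζ).coeff n = 0 := by rw [h, coeff_zero]
    simp only [cuspidalSextic, coeff_add, coeff_C_mul, coeff_X_pow, coeff_X, coeff_C] at hcoeff
    exact ⟨by simpa using hcoeff 2, by simpa using hcoeff 0, by simpa using hcoeff 6,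
      by simpa using hcoeff 1, by simpa using hcoeff 4, by simpa using hcoeff 3⟩
  · rintro ⟨rfl, rfl, rfl, rfl, rfl, rfl⟩
    simp [cuspidalSextic]

theorem eq_cuspidalSextic_of_coeff_five_eq_zero {P : R[X]} (hdeg : P.natDegree ≤ 6)
    (hcoeff : P.coeff 5 = 0) :
    P = cuspidalSextic (P.coeff 2) (P.coeff 0) (P.coeff 6) (P.coeff 1) (P.coeff 4)
      (P.coeff 3) := by
  conv_lhs => rw [P.as_sum_range_C_mul_X_pow' (Nat.lt_succ_of_le hdeg)]
  simp only [Finset.sum_range_succ, Finset.sum_range_zero, hcoeff, cuspidalSextic, C_0, zero_mul,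
    pow_zero, pow_one, mul_one]
  abel

end Semiring

theorem eval_cuspidalSextic_eq_zero_iff {k : Type*} [Field k] {v : k} (hv : v ≠ 0)
    (α β γ δ ε ζ : k) :
    (cuspidalSextic α β γ δ ε ζ).eval v = 0 ↔
      α * (v⁻¹ ^ 2) ^ 2 + β * (v⁻¹ ^ 3) ^ 2 + γ * 1 ^ 2 + δ * (v⁻¹ ^ 2 * v⁻¹ ^ 3) +
        ε * (v⁻¹ ^ 2 * 1) + ζ * (v⁻¹ ^ 3 * 1) = 0 := by
  have hscale : (cuspidalSextic α β γ δ ε ζ).eval v =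
      v ^ 6 * (α * (v⁻¹ ^ 2) ^ 2 + β * (v⁻¹ ^ 3) ^ 2 + γ * 1 ^ 2 + δ * (v⁻¹ ^ 2 * v⁻¹ ^ 3) +
        ε * (v⁻¹ ^ 2 * 1) + ζ * (v⁻¹ ^ 3 * 1)) := by
    simp only [cuspidalSextic, eval_add, eval_mul, eval_C, eval_pow, eval_X]
    field_simp
    ring
  rw [hscale, mul_eq_zero, or_iff_right (pow_ne_zero 6 hv)]

end CuspidalSextic

/-- For six pairwise distinct nonzero elements `u₁, …, u₆` of a field `k`, there is
a nonzero quadratic form `α x² + β y² + γ z² + δ x y + ε x z + ζ y z` vanishing at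
all six points `(uᵢ⁻², uᵢ⁻³, 1)` if and only if `u₁ + ⋯ + u₆ = 0`; i.e. the six
points `[uᵢ⁻² : uᵢ⁻³ : 1]` of `ℙ²(k)` lie on a common conic iff `∑ uᵢ = 0`. -/
theorem stmt_6 {k : Type*} [Field k] (u : Fin 6 → k)
    (h0 : ∀ i, u i ≠ 0) (hinj : Function.Injective u) :
    (∃ α β γ δ ε ζ : k, ¬(α = 0 ∧ β = 0 ∧ γ = 0 ∧ δ = 0 ∧ ε = 0 ∧ ζ = 0) ∧
      ∀ i, α * ((u i)⁻¹ ^ 2) ^ 2 + β * ((u i)⁻¹ ^ 3) ^ 2 + γ * 1 ^ 2 +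
        δ * ((u i)⁻¹ ^ 2 * (u i)⁻¹ ^ 3) + ε * ((u i)⁻¹ ^ 2 * 1) +
        ζ * ((u i)⁻¹ ^ 3 * 1) = 0) ↔
      ∑ i, u i = 0 := by
  have hvieta := exists_ne_zero_coeff_card_pred_eq_zero_iff_sum_eq_zero (s := Finset.univ)
    hinj.injOn Finset.univ_nonempty
  simp only [Finset.card_fin, Nat.add_one_sub_one, Finset.mem_univ, true_imp_iff] at hvieta
  simp only [← hvieta, ← eval_cuspidalSextic_eq_zero_iff (h0 _), ← cuspidalSextic_eq_zero_iff]
  constructor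
  · rintro ⟨α, β, γ, δ, ε, ζ, hne, hroot⟩
    exact ⟨cuspidalSextic α β γ δ ε ζ, hne, natDegree_cuspidalSextic_le ..,
      coeff_five_cuspidalSextic .., hroot⟩
  · rintro ⟨P, hne, hdeg, hcoeff, hroot⟩
    rw [eq_cuspidalSextic_of_coeff_five_eq_zero hdeg hcoeff] at hne hroot
    exact ⟨_, _, _, _, _, _, hne, hroot⟩
end

section
/- With the notation of the even-case construction: in the polynomial ring R[u] one has p₁ = 0 and q₁ = 0. -/
open Polynomial

/-!
The polynomial `Q` is an odd function of `S`: all its factors but `S³` are polynomials in `S²`.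
Hence `ε_m = 0` for every odd `m`. Both `48 p₁ = ε₅` and, once `p₁ = 0`, `1344 q₁ = ε₉` then vanish,
and `48 = 2⁴ · 3` and `1344 = 2⁶ · 3 · 7` can be cancelled.
-/

theorem coeff_comp_neg_X {A : Type*} [Ring A] (p : A[X]) (k : ℕ) :
    (p.comp (-X)).coeff k = p.coeff k * (-1) ^ k := by
  rw [← comp_C_mul_X_coeff, C_neg, C_1, neg_one_mul]

theorem coeff_eq_zero_of_comp_neg_X_eq_neg {A : Type*} [Ring A] (h2 : IsLeftRegular (2 : A))
    {p : A[X]} (hp : p.comp (-X) = -p) {k : ℕ} (hk : Even k) : p.coeff k = 0 := by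
  have hcoeff : p.coeff k = -p.coeff k := by
    rw [← coeff_neg, ← hp, coeff_comp_neg_X, hk.neg_one_pow, mul_one]
  exact h2.mul_left_eq_zero_iff.mp ((two_mul _).trans (eq_neg_iff_add_eq_zero.mp hcoeff))

section EvenCase

variable {A : Type*} [CommRing A]

/-- The polynomial `Q(u, S)` in the variable `S`, with `u` specialised to an element of any
commutative ring `A`; the universal case is `A = R[u]`. -/
noncomputable def evenCasePolynomial (u : A) : A[X] :=
  X ^ 3 * (X ^ 2 - 1) ^ 2 * (X ^ 2 - 4) * (X ^ 2 - 9) ^ 2 * (X ^ 2 - 16) *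
    (X ^ 2 - C u) ^ 2 *
    (X ^ 4 - (2 + 2 * C u) * X ^ 2 + (1 - C u) ^ 2) *
    (X ^ 4 - (18 + 2 * C u) * X ^ 2 + (9 - C u) ^ 2)

theorem evenCasePolynomial_comp_neg_X (u : A) :
    (evenCasePolynomial u).comp (-X) = -evenCasePolynomial u := by
  simp only [evenCasePolynomial, mul_comp, add_comp, sub_comp, pow_comp, X_comp, C_comp, one_comp,
    ofNat_comp]
  ring

theorem stmt_7_general (h2 : IsRegular (2 : A)) (h3 : IsRegular (3 : A)) (h7 : IsRegular (7 : A))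
    {Q : A[X]} (hQ : Q.comp (-X) = -Q)
    {ε : ℕ → A} (hε : ∀ m ≤ 27, ε m = Q.coeff (27 - m))
    {p₂ p₁ q₁ : A} (hp₂ : 12 * p₂ = ε 2) (hp₁ : 48 * p₁ = ε 5)
    (hq₁ : 1344 * q₁ = ε 9 - 1008 * p₁ * p₂ ^ 2) :
    p₁ = 0 ∧ q₁ = 0 := by
  have hε5 : ε 5 = 0 :=
    (hε 5 (by norm_num)).trans (coeff_eq_zero_of_comp_neg_X_eq_neg h2.left hQ (by decide))
  have hε9 : ε 9 = 0 :=
    (hε 9 (by norm_num)).trans (coeff_eq_zero_of_comp_neg_X_eq_neg h2.left hQ (by decide))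
  have h48 : IsRegular (2 ^ 4 * 3 : A) := (h2.pow 4).mul h3
  have h1344 : IsRegular (2 ^ 6 * 3 * 7 : A) := ((h2.pow 6).mul h3).mul h7
  obtain rfl : p₁ = 0 := h48.left.mul_left_eq_zero_iff.mp (by linear_combination hp₁ + hε5)
  exact ⟨rfl, h1344.left.mul_left_eq_zero_iff.mp (by linear_combination hq₁ + hε9)⟩

end EvenCase

/-- Even case: in `R[u]` one has `p₁ = 0` and `q₁ = 0`. -/
theorem stmt_7
    {R : Type*} [CommRing R]
    (h2 : IsUnit (2 : R)) (h3 : IsUnit (3 : R)) (h5 : IsUnit (5 : R)) (h7 : IsUnit (7 : R))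
    (Q : Polynomial (Polynomial R))
    (hQ : Q = X ^ 3 * (X ^ 2 - 1) ^ 2 * (X ^ 2 - 4) * (X ^ 2 - 9) ^ 2 * (X ^ 2 - 16) *
      (X ^ 2 - C X) ^ 2 *
      (X ^ 4 - (2 + 2 * C X) * X ^ 2 + (1 - C X) ^ 2) *
      (X ^ 4 - (18 + 2 * C X) * X ^ 2 + (9 - C X) ^ 2))
    (ε : ℕ → Polynomial R) (hε : ∀ m ≤ 27, ε m = Q.coeff (27 - m))
    (p₂ p₁ q₂ p₀ q₁ q₀ : Polynomial R)
    (hp₂ : 12 * p₂ = ε 2)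
    (hp₁ : 48 * p₁ = ε 5)
    (hq₂ : 96 * q₂ = ε 6 - 168 * p₂ ^ 3)
    (hp₀ : 480 * p₀ = ε 8 - 294 * p₂ ^ 4 - 528 * p₂ * q₂)
    (hq₁ : 1344 * q₁ = ε 9 - 1008 * p₁ * p₂ ^ 2)
    (hq₀ : 17280 * q₀ = ε 12 - 608 * p₁ ^ 2 * p₂ - 4768 * p₀ * p₂ ^ 2 - 252 * p₂ ^ 6 -
      1200 * p₂ ^ 3 * q₂ + 1248 * q₂ ^ 2)
    : p₁ = 0 ∧ q₁ = 0 := by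
  subst hQ
  exact stmt_7_general (h2.map C).isRegular (h3.map C).isRegular (h7.map C).isRegular
    (evenCasePolynomial_comp_neg_X X) hε hp₂ hp₁ hq₁
end

section
/- With the notation of the even-case construction: the Weierstrass curve over R[u] with coefficients (a₁, a₂, a₃, a₄, a₆) = (0, 0, 0, p₀, q₀), i.e. the curve y² = x³ + p₀x + q₀, has discriminant zero; equivalently, −16(4p₀³ + 27q₀²) = 0 in R[u]. -/
open Polynomial

/-!
`Q(u, S)` is the case `(α, β, γ) = (1, 9, u)` of a family of polynomials whose roots are `0` (three
times), `±√α`, `±√β`, `±√γ` (twice each) and `±√α ± √β`, `±√β ± √γ`, `±√γ ± √α`. These are the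
27 weights of the minuscule representation of `E₆`, restricted to `Sp₆ ⊂ SL₆`, and `p₂, …, q₀` are
Shioda's invariants of the elliptic surface
`y² = x³ + (p₂t² + p₁t + p₀)x + (t⁴ + q₂t² + q₁t + q₀)` that they determine. With
`δ = α² + β² + γ² - 2(αβ + βγ + γα)` and `c = δ / 48`, solving for the invariants gives `p₀ = -3c²`
and `q₀ = 2c³`, so that the fiber at `t = 0` is `y² = (x - c)²(x + 2c)`, singular at `x = c`.
-/

section WeightPolynomial

variable {A : Type*} [CommRing A]

/-- The Källén triangle function. It satisfies
`kallen (a ^ 2) (b ^ 2) (c ^ 2) = (a + b + c) * (a + b - c) * (a - b + c) * (a - b - c)`, so the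
roots of `kallen (X ^ 2) (C α) (C β)` are `±√α ± √β`. -/
def kallen (x y z : A) : A :=
  x ^ 2 + y ^ 2 + z ^ 2 - 2 * (x * y + y * z + z * x)

/-- The monic polynomial whose roots are the 27 weights `0`, `±√α`, `±√β`, `±√γ`, `±√α ± √β`,
`±√β ± √γ`, `±√γ ± √α` (with multiplicities 3, 2 and 1) of the minuscule representation of `E₆`
restricted to `Sp₆ ⊂ SL₆`. -/
noncomputable def weightPolynomial (α β γ : A) : A[X] :=
  X ^ 3 * ((X ^ 2 - C α) * (X ^ 2 - C β) * (X ^ 2 - C γ)) ^ 2 *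
    (kallen (X ^ 2) (C α) (C β) * kallen (X ^ 2) (C β) (C γ) * kallen (X ^ 2) (C γ) (C α))

section Expansion

variable (α β γ : A)

local notation "e₁" => α + β + γ
local notation "e₂" => α * β + β * γ + γ * α
local notation "e₃" => α * β * γ

theorem kallen_eq_sq_sub : kallen α β γ = e₁ ^ 2 - 4 * e₂ := by
  rw [kallen]
  ring

theorem kallen_mul_kallen_mul_kallen (t : A) :
    kallen t α β * kallen t β γ * kallen t γ α =
      t ^ 6 - 4 * e₁ * t ^ 5 + (6 * e₁ ^ 2 - 2 * e₂) * t ^ 4 +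
        (-4 * e₁ ^ 3 + 2 * e₁ * e₂ + 26 * e₃) * t ^ 3 +
        (e₁ ^ 4 + 2 * e₁ ^ 2 * e₂ - 24 * e₁ * e₃ - 7 * e₂ ^ 2) * t ^ 2 +
        (-2 * e₁ ^ 3 * e₂ + 18 * e₁ ^ 2 * e₃ + 6 * e₁ * e₂ ^ 2 - 54 * e₂ * e₃) * t +
        (-4 * e₁ ^ 3 * e₃ + e₁ ^ 2 * e₂ ^ 2 + 18 * e₁ * e₂ * e₃ - 4 * e₂ ^ 3 - 27 * e₃ ^ 2) := by
  simp only [kallen]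
  ring

theorem sub_mul_sub_mul_sub (t : A) :
    (t - α) * (t - β) * (t - γ) = t ^ 3 - e₁ * t ^ 2 + e₂ * t - e₃ := by
  ring

theorem weightPolynomial_eq :
    weightPolynomial α β γ =
      X ^ 27 +
        C (-6 * e₁) * X ^ 25 +
        C (15 * e₁ ^ 2) * X ^ 23 +
        C (-20 * e₁ ^ 3 - 4 * e₁ * e₂ + 24 * e₃) * X ^ 21 +
        C (15 * e₁ ^ 4 + 16 * e₁ ^ 2 * e₂ - 66 * e₁ * e₃ - 10 * e₂ ^ 2) * X ^ 19 +
        C (-6 * e₁ ^ 5 - 24 * e₁ ^ 3 * e₂ + 72 * e₁ ^ 2 * e₃ + 24 * e₁ * e₂ ^ 2) * X ^ 17 +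
        C (e₁ ^ 6 + 16 * e₁ ^ 4 * e₂ - 44 * e₁ ^ 3 * e₃ - 12 * e₁ ^ 2 * e₂ ^ 2 +
           26 * e₁ * e₂ * e₃ - 20 * e₂ ^ 3 - 78 * e₃ ^ 2) * X ^ 15 +
        C (-4 * e₁ ^ 5 * e₂ + 16 * e₁ ^ 4 * e₃ - 8 * e₁ ^ 3 * e₂ ^ 2 - 18 * e₁ ^ 2 * e₂ * e₃ +
           36 * e₁ * e₂ ^ 3 + 150 * e₁ * e₃ ^ 2 - 64 * e₂ ^ 2 * e₃) * X ^ 13 +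
        C (-2 * e₁ ^ 5 * e₃ + 6 * e₁ ^ 4 * e₂ ^ 2 - 10 * e₁ ^ 3 * e₂ * e₃ -
           12 * e₁ ^ 2 * e₂ ^ 3 - 105 * e₁ ^ 2 * e₃ ^ 2 + 90 * e₁ * e₂ ^ 2 * e₃ -
           15 * e₂ ^ 4) * X ^ 11 +
        C (2 * e₁ ^ 4 * e₂ * e₃ - 4 * e₁ ^ 3 * e₂ ^ 3 + 40 * e₁ ^ 3 * e₃ ^ 2 -
           12 * e₁ ^ 2 * e₂ ^ 2 * e₃ + 14 * e₁ * e₂ ^ 4 - 40 * e₁ * e₂ * e₃ ^ 2 -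
           32 * e₂ ^ 3 * e₃ + 80 * e₃ ^ 3) * X ^ 9 +
        C (-7 * e₁ ^ 4 * e₃ ^ 2 + 2 * e₁ ^ 3 * e₂ ^ 2 * e₃ + e₁ ^ 2 * e₂ ^ 4 +
           2 * e₁ ^ 2 * e₂ * e₃ ^ 2 - 2 * e₁ * e₂ ^ 3 * e₃ - 78 * e₁ * e₃ ^ 3 - 4 * e₂ ^ 5 +
           74 * e₂ ^ 2 * e₃ ^ 2) * X ^ 7 +
        C (6 * e₁ ^ 3 * e₂ * e₃ ^ 2 - 2 * e₁ ^ 2 * e₂ ^ 3 * e₃ + 18 * e₁ ^ 2 * e₃ ^ 3 -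
           30 * e₁ * e₂ ^ 2 * e₃ ^ 2 + 8 * e₂ ^ 4 * e₃) * X ^ 5 +
        C (-4 * e₁ ^ 3 * e₃ ^ 3 + e₁ ^ 2 * e₂ ^ 2 * e₃ ^ 2 + 18 * e₁ * e₂ * e₃ ^ 3 -
           4 * e₂ ^ 3 * e₃ ^ 2 - 27 * e₃ ^ 4) * X ^ 3 := by
  rw [weightPolynomial, sub_mul_sub_mul_sub, kallen_mul_kallen_mul_kallen]
  simp only [← map_add, ← map_mul]
  generalize e₁ = s, e₂ = p, e₃ = q
  simp only [map_add, map_sub, map_neg, map_mul, map_pow, map_ofNat]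
  ring

theorem weightPolynomial_coeff_25 : (weightPolynomial α β γ).coeff 25 = -6 * e₁ := by
  rw [weightPolynomial_eq]
  simp only [coeff_add, coeff_C_mul, coeff_X_pow]
  norm_num

theorem weightPolynomial_coeff_22 : (weightPolynomial α β γ).coeff 22 = 0 := by
  rw [weightPolynomial_eq]
  simp only [coeff_add, coeff_C_mul, coeff_X_pow]
  norm_num

theorem weightPolynomial_coeff_21 :
    (weightPolynomial α β γ).coeff 21 = -20 * e₁ ^ 3 - 4 * e₁ * e₂ + 24 * e₃ := by
  rw [weightPolynomial_eq]
  simp only [coeff_add, coeff_C_mul, coeff_X_pow]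
  norm_num

theorem weightPolynomial_coeff_19 :
    (weightPolynomial α β γ).coeff 19 =
      15 * e₁ ^ 4 + 16 * e₁ ^ 2 * e₂ - 66 * e₁ * e₃ - 10 * e₂ ^ 2 := by
  rw [weightPolynomial_eq]
  simp only [coeff_add, coeff_C_mul, coeff_X_pow]
  norm_num

theorem weightPolynomial_coeff_15 :
    (weightPolynomial α β γ).coeff 15 =
      e₁ ^ 6 + 16 * e₁ ^ 4 * e₂ - 44 * e₁ ^ 3 * e₃ - 12 * e₁ ^ 2 * e₂ ^ 2 + 26 * e₁ * e₂ * e₃ -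
        20 * e₂ ^ 3 - 78 * e₃ ^ 2 := by
  rw [weightPolynomial_eq]
  simp only [coeff_add, coeff_C_mul, coeff_X_pow]
  norm_num

end Expansion

section Invariants

variable {α β γ p₂ p₁ q₂ p₀ q₀ : A}

theorem two_mul_p₂_eq (h6 : IsRegular (6 : A))
    (hp₂ : 12 * p₂ = (weightPolynomial α β γ).coeff 25) :
    2 * p₂ = -(α + β + γ) := by
  rw [weightPolynomial_coeff_25] at hp₂
  exact h6.left (by linear_combination hp₂)

theorem two_pow_mul_p₂_pow_eq (hp₂ : 2 * p₂ = -(α + β + γ)) (n : ℕ) :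
    2 ^ n * p₂ ^ n = (-(α + β + γ)) ^ n := by
  rw [← hp₂, mul_pow]

theorem mul_q₂_eq (hp₂ : 2 * p₂ = -(α + β + γ))
    (hq₂ : 96 * q₂ = (weightPolynomial α β γ).coeff 21 - 168 * p₂ ^ 3) :
    96 * q₂ = (α + β + γ) * kallen α β γ + 24 * (α * β * γ) := by
  rw [weightPolynomial_coeff_21] at hq₂
  rw [kallen_eq_sq_sub]
  linear_combination hq₂ - 21 * two_pow_mul_p₂_pow_eq hp₂ 3

theorem mul_p₀_eq (h30 : IsRegular (30 : A)) (hp₂ : 2 * p₂ = -(α + β + γ))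
    (hq₂ : 96 * q₂ = (α + β + γ) * kallen α β γ + 24 * (α * β * γ))
    (hp₀ : 480 * p₀ = (weightPolynomial α β γ).coeff 19 - 294 * p₂ ^ 4 - 528 * p₂ * q₂) :
    768 * p₀ = -kallen α β γ ^ 2 := by
  rw [weightPolynomial_coeff_19] at hp₀
  have p₂q₂ := congrArg₂ (· * ·) hp₂ hq₂
  rw [kallen_eq_sq_sub] at p₂q₂ ⊢
  exact h30.left (by
    linear_combination 48 * hp₀ - 882 * two_pow_mul_p₂_pow_eq hp₂ 4 - 132 * p₂q₂)

theorem mul_q₀_eq (h30 : IsRegular (30 : A)) (hp₂ : 2 * p₂ = -(α + β + γ))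
    (hp₁ : 48 * p₁ = (weightPolynomial α β γ).coeff 22)
    (hq₂ : 96 * q₂ = (α + β + γ) * kallen α β γ + 24 * (α * β * γ))
    (hp₀ : 768 * p₀ = -kallen α β γ ^ 2)
    (hq₀ : 17280 * q₀ = (weightPolynomial α β γ).coeff 15 - 608 * p₁ ^ 2 * p₂ -
      4768 * p₀ * p₂ ^ 2 - 252 * p₂ ^ 6 - 1200 * p₂ ^ 3 * q₂ + 1248 * q₂ ^ 2) :
    55296 * q₀ = kallen α β γ ^ 3 := by
  rw [weightPolynomial_coeff_22] at hp₁
  rw [weightPolynomial_coeff_15] at hq₀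
  have p₀p₂ := congrArg₂ (· * ·) hp₀ (two_pow_mul_p₂_pow_eq hp₂ 2)
  have p₂q₂ := congrArg₂ (· * ·) (two_pow_mul_p₂_pow_eq hp₂ 3) hq₂
  have q₂q₂ := congrArg₂ (· * ·) hq₂ hq₂
  rw [kallen_eq_sq_sub] at p₀p₂ p₂q₂ q₂q₂ ⊢
  exact h30.left (by
    linear_combination 96 * hq₀ - 1216 * p₁ * p₂ * hp₁ - 149 * p₀p₂ -
      378 * two_pow_mul_p₂_pow_eq hp₂ 6 - 150 * p₂q₂ + 13 * q₂q₂)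

theorem discr_eq_zero_of_node {r c p q : A} (hr : IsRegular r)
    (hp : r ^ 2 * p = -3 * c ^ 2) (hq : r ^ 3 * q = 2 * c ^ 3) :
    4 * p ^ 3 + 27 * q ^ 2 = 0 := by
  refine (hr.pow 6).left ?_
  calc r ^ 6 * (4 * p ^ 3 + 27 * q ^ 2) = 4 * (r ^ 2 * p) ^ 3 + 27 * (r ^ 3 * q) ^ 2 := by ring
    _ = r ^ 6 * 0 := by rw [hp, hq]; ring

theorem stmt_8_general (h2 : IsRegular (2 : A)) (h3 : IsRegular (3 : A)) (h5 : IsRegular (5 : A))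
    (hp₂ : 12 * p₂ = (weightPolynomial α β γ).coeff 25)
    (hp₁ : 48 * p₁ = (weightPolynomial α β γ).coeff 22)
    (hq₂ : 96 * q₂ = (weightPolynomial α β γ).coeff 21 - 168 * p₂ ^ 3)
    (hp₀ : 480 * p₀ = (weightPolynomial α β γ).coeff 19 - 294 * p₂ ^ 4 - 528 * p₂ * q₂)
    (hq₀ : 17280 * q₀ = (weightPolynomial α β γ).coeff 15 - 608 * p₁ ^ 2 * p₂ -
      4768 * p₀ * p₂ ^ 2 - 252 * p₂ ^ 6 - 1200 * p₂ ^ 3 * q₂ + 1248 * q₂ ^ 2) :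
    -16 * (4 * p₀ ^ 3 + 27 * q₀ ^ 2) = 0 := by
  have h6 : IsRegular (6 : A) := (by norm_num : (2 * 3 : A) = 6) ▸ h2.mul h3
  have h30 : IsRegular (30 : A) := (by norm_num : (6 * 5 : A) = 30) ▸ h6.mul h5
  have h48 : IsRegular (48 : A) := (by norm_num : (2 ^ 3 * 6 : A) = 48) ▸ (h2.pow 3).mul h6
  have p₂_eq := two_mul_p₂_eq h6 hp₂
  have q₂_eq := mul_q₂_eq p₂_eq hq₂
  have p₀_eq := mul_p₀_eq h30 p₂_eq q₂_eq hp₀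
  have q₀_eq := mul_q₀_eq h30 p₂_eq hp₁ q₂_eq p₀_eq hq₀
  rw [discr_eq_zero_of_node (c := kallen α β γ) h48 (by linear_combination 3 * p₀_eq)
    (by linear_combination 2 * q₀_eq), mul_zero]

end Invariants

theorem weightPolynomial_one_nine (γ : A) :
    weightPolynomial 1 9 γ =
      X ^ 3 * (X ^ 2 - 1) ^ 2 * (X ^ 2 - 4) * (X ^ 2 - 9) ^ 2 * (X ^ 2 - 16) *
        (X ^ 2 - C γ) ^ 2 *
        (X ^ 4 - (2 + 2 * C γ) * X ^ 2 + (1 - C γ) ^ 2) *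
        (X ^ 4 - (18 + 2 * C γ) * X ^ 2 + (9 - C γ) ^ 2) := by
  simp only [weightPolynomial, kallen, map_one, map_ofNat]
  ring

end WeightPolynomial

/-- Even case: the Weierstrass curve `y² = x³ + p₀x + q₀` over `R[u]` has discriminant zero. -/
theorem stmt_8
    {R : Type*} [CommRing R]
    (h2 : IsUnit (2 : R)) (h3 : IsUnit (3 : R)) (h5 : IsUnit (5 : R)) (h7 : IsUnit (7 : R))
    (Q : Polynomial (Polynomial R))
    (hQ : Q = X ^ 3 * (X ^ 2 - 1) ^ 2 * (X ^ 2 - 4) * (X ^ 2 - 9) ^ 2 * (X ^ 2 - 16) *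
      (X ^ 2 - C X) ^ 2 *
      (X ^ 4 - (2 + 2 * C X) * X ^ 2 + (1 - C X) ^ 2) *
      (X ^ 4 - (18 + 2 * C X) * X ^ 2 + (9 - C X) ^ 2))
    (ε : ℕ → Polynomial R) (hε : ∀ m ≤ 27, ε m = Q.coeff (27 - m))
    (p₂ p₁ q₂ p₀ q₁ q₀ : Polynomial R)
    (hp₂ : 12 * p₂ = ε 2)
    (hp₁ : 48 * p₁ = ε 5)
    (hq₂ : 96 * q₂ = ε 6 - 168 * p₂ ^ 3)
    (hp₀ : 480 * p₀ = ε 8 - 294 * p₂ ^ 4 - 528 * p₂ * q₂)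
    (hq₁ : 1344 * q₁ = ε 9 - 1008 * p₁ * p₂ ^ 2)
    (hq₀ : 17280 * q₀ = ε 12 - 608 * p₁ ^ 2 * p₂ - 4768 * p₀ * p₂ ^ 2 - 252 * p₂ ^ 6 -
      1200 * p₂ ^ 3 * q₂ + 1248 * q₂ ^ 2)
    : -16 * (4 * p₀ ^ 3 + 27 * q₀ ^ 2) = 0 := by
  have isRegular {n : ℕ} [n.AtLeastTwo] (hn : IsUnit (OfNat.ofNat n : R)) :
      IsRegular (OfNat.ofNat n : R[X]) := by
    simpa only [map_ofNat] using (hn.map (C : R →+* R[X])).isRegular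
  rw [← weightPolynomial_one_nine] at hQ
  rw [hε _ (by norm_num), hQ] at hp₂ hp₁ hq₂ hp₀ hq₀
  exact stmt_8_general (isRegular h2) (isRegular h3) (isRegular h5) hp₂ hp₁ hq₂ hp₀ hq₀
end

section
/- With the notation of the even-case construction: the c₄-invariant of the Weierstrass curve y² = x³ + p₀x + q₀ over R[u], namely −48p₀, equals (u−4)²(u−16)²/16 in R[u]. -/
open Polynomial

/-! The polynomial `Q` is `S³` times a product of two sextics in `S²`, only one of which involves
`u`; this makes `ε₂`, `ε₆`, `ε₈` short convolutions. The first one determines `p₂ = -(u + 10) / 2`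
up to `3`-torsion, and that torsion never matters: in the relations for `q₂` and `p₀` every
occurrence of `p₂` has a coefficient divisible by `3`, and `q₂` can be eliminated as `96q₂`.
So `3840p₀` is an explicit quartic in `u`, namely `-5(u - 4)²(u - 16)²`. -/

theorem coeff_mul_sub_eq_sum_antidiagonal {R : Type*} [Semiring R] {p q : R[X]} {m n k : ℕ}
    (hp : p.natDegree ≤ m) (hq : q.natDegree ≤ n) (hkm : k ≤ m) (hkn : k ≤ n) :
    (p * q).coeff (m + n - k) =
      ∑ ij ∈ Finset.HasAntidiagonal.antidiagonal k, p.coeff (m - ij.1) * q.coeff (n - ij.2) := by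
  have h_revAt : revAt (m + n) k = m + n - k := revAt_le (by lia)
  rw [← h_revAt, ← coeff_reflect, reflect_mul p q hp hq, coeff_mul]
  refine Finset.sum_congr rfl fun ij hij => ?_
  have h_sum : ij.1 + ij.2 = k := Finset.HasAntidiagonal.mem_antidiagonal.mp hij
  rw [coeff_reflect, coeff_reflect, revAt_le (by lia), revAt_le (by lia)]

theorem isRegular_ofNat_of_isUnit {R : Type*} [Semiring R] {n : ℕ} [n.AtLeastTwo]
    (hn : IsUnit (ofNat(n) : R)) : IsRegular (ofNat(n) : R[X]) := by
  rw [← map_ofNat C]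
  exact (hn.map C).isRegular

section EvenCase

variable {A : Type*} [CommRing A]

/-- The polynomial `Q(u, S)` of the even case, in the variable `S = X`, with the parameter `u`
specialized to an arbitrary element of a commutative ring. -/
noncomputable def evenCasePoly (u : A) : A[X] :=
  X ^ 3 * (X ^ 2 - 1) ^ 2 * (X ^ 2 - 4) * (X ^ 2 - 9) ^ 2 * (X ^ 2 - 16) *
    (X ^ 2 - C u) ^ 2 *
    (X ^ 4 - (2 + 2 * C u) * X ^ 2 + (1 - C u) ^ 2) *
    (X ^ 4 - (18 + 2 * C u) * X ^ 2 + (9 - C u) ^ 2)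

/-- The coefficient `ε_m` of `S ^ (27 - m)` in `Q(u, S)`, meaningful for `m ≤ 27` only, since the
subtraction is truncated. -/
noncomputable def evenCaseCoeff (u : A) (m : ℕ) : A :=
  (evenCasePoly u).coeff (27 - m)

variable (A) in
/-- The factor of `Q(u, S) / S³` independent of `u`, in the variable `S² = X`. -/
noncomputable def constantSextic : A[X] :=
  (X - 1) ^ 2 * (X - 4) * (X - 9) ^ 2 * (X - 16)

/-- The factor of `Q(u, S) / S³` depending on `u`, in the variable `S² = X`. -/
noncomputable def parametricSextic (u : A) : A[X] :=
  (X - C u) ^ 2 * (X ^ 2 - C (2 + 2 * u) * X + C ((1 - u) ^ 2)) *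
    (X ^ 2 - C (18 + 2 * u) * X + C ((9 - u) ^ 2))

theorem evenCasePoly_eq_X_pow_mul_expand (u : A) :
    evenCasePoly u = X ^ 3 * expand A 2 (constantSextic A * parametricSextic u) := by
  simp only [evenCasePoly, constantSextic, parametricSextic, map_add, map_sub, map_mul, map_pow,
    map_ofNat, map_one, expand_X, expand_C]
  ring

theorem natDegree_constantSextic_le : (constantSextic A).natDegree ≤ 6 := by
  unfold constantSextic
  compute_degree

theorem natDegree_parametricSextic_le (u : A) : (parametricSextic u).natDegree ≤ 6 := by
  unfold parametricSextic
  compute_degree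

theorem evenCaseCoeff_two_mul (u : A) {k : ℕ} (hk : k ≤ 6) :
    evenCaseCoeff u (2 * k) = ∑ ij ∈ Finset.HasAntidiagonal.antidiagonal k,
      (constantSextic A).coeff (6 - ij.1) * (parametricSextic u).coeff (6 - ij.2) := by
  have h_index : 27 - 2 * k = 2 * (6 + 6 - k) + 3 := by lia
  rw [evenCaseCoeff, evenCasePoly_eq_X_pow_mul_expand, h_index, coeff_X_pow_mul,
    coeff_expand_mul' two_pos, coeff_mul_sub_eq_sum_antidiagonal natDegree_constantSextic_le
      (natDegree_parametricSextic_le u) hk hk]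

theorem constantSextic_eq :
    constantSextic A = X ^ 6 - C 40 * X ^ 5 + C 582 * X ^ 4 - C 3820 * X ^ 3 + C 11233 * X ^ 2 -
      C 13140 * X + C 5184 := by
  simp only [constantSextic, map_ofNat]
  ring

theorem parametricSextic_eq (u : A) :
    parametricSextic u = X ^ 6 - C (20 + 6 * u) * X ^ 5 + C (118 + 60 * u + 15 * u ^ 2) * X ^ 4 -
      C (180 + 328 * u + 40 * u ^ 2 + 20 * u ^ 3) * X ^ 3 +
      C (81 + 180 * u + 420 * u ^ 2 - 40 * u ^ 3 + 15 * u ^ 4) * X ^ 2 -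
      C (162 * u - 180 * u ^ 2 + 328 * u ^ 3 - 60 * u ^ 4 + 6 * u ^ 5) * X +
      C (u ^ 2 * (1 - u) ^ 2 * (9 - u) ^ 2) := by
  simp only [parametricSextic, map_add, map_sub, map_mul, map_pow, map_ofNat, map_one]
  ring

theorem evenCaseCoeff_two (u : A) : evenCaseCoeff u 2 = -60 - 6 * u := by
  rw [evenCaseCoeff_two_mul u (k := 1) (by norm_num)]
  simp only [Finset.Nat.sum_antidiagonal_eq_sum_range_succ_mk, Finset.sum_range_succ,
    Finset.sum_range_zero, constantSextic_eq, parametricSextic_eq, coeff_add, coeff_sub,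
    coeff_C_mul, coeff_X_pow, coeff_X, coeff_C, Nat.reduceSub, Nat.reduceEqDiff,
    OfNat.ofNat_ne_zero, OfNat.one_ne_ofNat, reduceIte]
  ring

theorem evenCaseCoeff_six (u : A) :
    evenCaseCoeff u 6 = -20360 - 6220 * u - 640 * u ^ 2 - 20 * u ^ 3 := by
  rw [evenCaseCoeff_two_mul u (k := 3) (by norm_num)]
  simp only [Finset.Nat.sum_antidiagonal_eq_sum_range_succ_mk, Finset.sum_range_succ,
    Finset.sum_range_zero, constantSextic_eq, parametricSextic_eq, coeff_add, coeff_sub,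
    coeff_C_mul, coeff_X_pow, coeff_X, coeff_C, Nat.reduceSub, Nat.reduceEqDiff,
    OfNat.ofNat_ne_zero, OfNat.one_ne_ofNat, reduceIte]
  ring

theorem evenCaseCoeff_eight (u : A) :
    evenCaseCoeff u 8 = 163590 + 71140 * u + 10750 * u ^ 2 + 760 * u ^ 3 + 15 * u ^ 4 := by
  rw [evenCaseCoeff_two_mul u (k := 4) (by norm_num)]
  simp only [Finset.Nat.sum_antidiagonal_eq_sum_range_succ_mk, Finset.sum_range_succ,
    Finset.sum_range_zero, constantSextic_eq, parametricSextic_eq, coeff_add, coeff_sub,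
    coeff_C_mul, coeff_X_pow, coeff_X, coeff_C, Nat.reduceSub, Nat.reduceEqDiff,
    OfNat.ofNat_ne_zero, OfNat.one_ne_ofNat, reduceIte]
  ring

theorem stmt_9_general (h2 : IsRegular (2 : A)) (h5 : IsRegular (5 : A)) (u p₂ q₂ p₀ : A)
    (hp₂ : 12 * p₂ = evenCaseCoeff u 2)
    (hq₂ : 96 * q₂ = evenCaseCoeff u 6 - 168 * p₂ ^ 3)
    (hp₀ : 480 * p₀ = evenCaseCoeff u 8 - 294 * p₂ ^ 4 - 528 * p₂ * q₂) :
    16 * (-48 * p₀) = (u - 4) ^ 2 * (u - 16) ^ 2 := by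
  rw [evenCaseCoeff_two] at hp₂
  rw [evenCaseCoeff_six] at hq₂
  rw [evenCaseCoeff_eight] at hp₀
  have h_p₂ : 6 * p₂ = -3 * (u + 10) := h2.left <| by linear_combination hp₂
  have h_p₂_cube : 24 * p₂ ^ 3 = -3 * (u + 10) ^ 3 := by
    linear_combination (4 * p₂ ^ 2 - 2 * (u + 10) * p₂ + (u + 10) ^ 2) * h_p₂
  have h_p₂_fourth : 48 * p₂ ^ 4 = 3 * (u + 10) ^ 4 := by
    linear_combination 2 * p₂ * h_p₂_cube - (u + 10) ^ 3 * h_p₂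
  have h_q₂ : 96 * q₂ = u ^ 3 - 10 * u ^ 2 + 80 * u + 640 := by
    linear_combination hq₂ - 7 * h_p₂_cube
  have h_p₀ : 3840 * p₀ = -5 * ((u - 4) ^ 2 * (u - 16) ^ 2) := by
    linear_combination 8 * hp₀ - 49 * h_p₂_fourth - 704 * q₂ * h_p₂ + 22 * (u + 10) * h_q₂
  exact h5.left <| by linear_combination -h_p₀

end EvenCase

/-- Even case: the `c₄`-invariant `−48p₀` of `y² = x³ + p₀x + q₀` equals `(u−4)²(u−16)²/16` in `R[u]`. -/
theorem stmt_9
    {R : Type*} [CommRing R]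
    (h2 : IsUnit (2 : R)) (h3 : IsUnit (3 : R)) (h5 : IsUnit (5 : R)) (h7 : IsUnit (7 : R))
    (Q : Polynomial (Polynomial R))
    (hQ : Q = X ^ 3 * (X ^ 2 - 1) ^ 2 * (X ^ 2 - 4) * (X ^ 2 - 9) ^ 2 * (X ^ 2 - 16) *
      (X ^ 2 - C X) ^ 2 *
      (X ^ 4 - (2 + 2 * C X) * X ^ 2 + (1 - C X) ^ 2) *
      (X ^ 4 - (18 + 2 * C X) * X ^ 2 + (9 - C X) ^ 2))
    (ε : ℕ → Polynomial R) (hε : ∀ m ≤ 27, ε m = Q.coeff (27 - m))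
    (p₂ p₁ q₂ p₀ q₁ q₀ : Polynomial R)
    (hp₂ : 12 * p₂ = ε 2)
    (hp₁ : 48 * p₁ = ε 5)
    (hq₂ : 96 * q₂ = ε 6 - 168 * p₂ ^ 3)
    (hp₀ : 480 * p₀ = ε 8 - 294 * p₂ ^ 4 - 528 * p₂ * q₂)
    (hq₁ : 1344 * q₁ = ε 9 - 1008 * p₁ * p₂ ^ 2)
    (hq₀ : 17280 * q₀ = ε 12 - 608 * p₁ ^ 2 * p₂ - 4768 * p₀ * p₂ ^ 2 - 252 * p₂ ^ 6 -
      1200 * p₂ ^ 3 * q₂ + 1248 * q₂ ^ 2)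
    : 16 * (-48 * p₀) = (X - 4) ^ 2 * (X - 16) ^ 2 := by
  rw [hε _ (by norm_num), hQ] at hp₂ hq₂ hp₀
  exact stmt_9_general (isRegular_ofNat_of_isUnit h2) (isRegular_ofNat_of_isUnit h5)
    X p₂ q₂ p₀ hp₂ hq₂ hp₀
end

section
/- With the notation of the even-case construction: the discriminant of the monic cubic polynomial x³ − (p₂²/4)x² + (p₀ − p₂q₂/2)x + (q₀ − q₂²/4) over R[u] equals 81u²(u−1)²(u−9)²/64 in R[u]. -/
open Polynomial

/-!
Write `u = c²`. The roots of `Q` are `0` (three times), `±a`, `±b`, `±c` (twice each) and `±a ± b`,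
`±a ± c`, `±b ± c`, where `a = 1` and `b = 3`; so `Q` is symmetric in `α = a²`, `β = b²`, `γ = c²`
and everything can be written in the elementary symmetric functions `e₁`, `e₂`, `e₃` of these.
With `w = e₁² - 4e₂` one finds `p₁ = 0`, `p₂ = -e₁/2`, `q₂ = (e₁w + 24e₃)/96`, `p₀ = -w²/768` and
`q₀ = w³/55296`. Substituting `x = w/48 + z` turns the cubic into
`z³ - (e₂/4)z² + (e₁e₃/16)z - e₃²/64 = (z - αβ/4)(z - αγ/4)(z - βγ/4)`.
-/

theorem pow_six_mul_discr_of_scaled_roots {K : Type*} [CommRing K] {k A B C x y z : K}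
    (hA : k * A = -(x + y + z)) (hB : k ^ 2 * B = x * y + x * z + y * z)
    (hC : k ^ 3 * C = -(x * y * z)) :
    k ^ 6 * (Cubic.mk 1 A B C).discr = ((x - y) * (x - z) * (y - z)) ^ 2 := by
  calc k ^ 6 * (Cubic.mk 1 A B C).discr
      = (Cubic.mk 1 (k * A) (k ^ 2 * B) (k ^ 3 * C)).discr := by simp only [Cubic.discr]; ring
    _ = ((x - y) * (x - z) * (y - z)) ^ 2 := by simp only [hA, hB, hC, Cubic.discr]; ring

section LinePolynomial

variable {K : Type*} [CommRing K]

/-- The polynomial with roots `0` (three times), `±a`, `±b`, `±c` (twice each) and `±a ± b`,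
`±a ± c`, `±b ± c`, in terms of `α = a²`, `β = b²`, `γ = c²`. The polynomial `Q(u, S)` of the even
case is `linePoly 1 9 u`. -/
noncomputable def linePoly (α β γ : K) : K[X] :=
  X ^ 3 * ((X ^ 2 - C α) * (X ^ 2 - C β) * (X ^ 2 - C γ)) ^ 2 *
    ((X ^ 4 - C (2 * (α + β)) * X ^ 2 + C ((α - β) ^ 2)) *
      (X ^ 4 - C (2 * (α + γ)) * X ^ 2 + C ((α - γ) ^ 2)) *
      (X ^ 4 - C (2 * (β + γ)) * X ^ 2 + C ((β - γ) ^ 2)))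

/-- The polynomial `P` with `linePoly α β γ = X³ · P(X²)`, written in terms of the elementary
symmetric functions `e₁`, `e₂`, `e₃` of `α`, `β`, `γ`. The second factor is the product of
`X² - 2(α + β)X + (α - β)²` and its two analogues, with constant term the discriminant of the
cubic in the first. -/
noncomputable def squaredLinePoly (e₁ e₂ e₃ : K) : K[X] :=
  (X ^ 3 - C e₁ * X ^ 2 + C e₂ * X - C e₃) ^ 2 *
    (X ^ 6 - C (4 * e₁) * X ^ 5 + C (6 * e₁ ^ 2 - 2 * e₂) * X ^ 4 -
      C (4 * e₁ ^ 3 - 2 * e₁ * e₂ - 26 * e₃) * X ^ 3 +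
      C (e₁ ^ 4 + 2 * e₁ ^ 2 * e₂ - 7 * e₂ ^ 2 - 24 * e₁ * e₃) * X ^ 2 -
      C (2 * e₁ ^ 3 * e₂ - 6 * e₁ * e₂ ^ 2 - 18 * e₁ ^ 2 * e₃ + 54 * e₂ * e₃) * X +
      C (e₁ ^ 2 * e₂ ^ 2 - 4 * e₂ ^ 3 - 4 * e₁ ^ 3 * e₃ + 18 * e₁ * e₂ * e₃ - 27 * e₃ ^ 2))

theorem linePoly_eq_X_pow_mul_expand (α β γ : K) :
    linePoly α β γ = X ^ 3 *
      expand K 2 (squaredLinePoly (α + β + γ) (α * β + α * γ + β * γ) (α * β * γ)) := by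
  simp only [linePoly, squaredLinePoly, map_add, map_sub, map_mul, map_pow, map_ofNat, expand_C,
    expand_X]
  ring

theorem coeff_linePoly_two_mul_add_three (α β γ : K) (k : ℕ) :
    (linePoly α β γ).coeff (2 * k + 3) =
      (squaredLinePoly (α + β + γ) (α * β + α * γ + β * γ) (α * β * γ)).coeff k := by
  rw [linePoly_eq_X_pow_mul_expand, coeff_X_pow_mul, coeff_expand_mul' two_pos]

theorem coeff_linePoly_of_even (α β γ : K) {n : ℕ} (hn : Even n) :
    (linePoly α β γ).coeff n = 0 := by
  rw [linePoly_eq_X_pow_mul_expand, coeff_X_pow_mul']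
  split_ifs with h
  · rw [coeff_expand two_pos, if_neg (by grind)]
  · rfl

theorem sq_cubic_eq (e₁ e₂ e₃ : K) :
    (X ^ 3 - C e₁ * X ^ 2 + C e₂ * X - C e₃) ^ 2 =
      X ^ 6 - C (2 * e₁) * X ^ 5 + C (e₁ ^ 2 + 2 * e₂) * X ^ 4 - C (2 * e₁ * e₂ + 2 * e₃) * X ^ 3 +
        C (e₂ ^ 2 + 2 * e₁ * e₃) * X ^ 2 - C (2 * e₂ * e₃) * X + C (e₃ ^ 2) := by
  simp only [map_add, map_mul, map_pow, map_ofNat]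
  ring

theorem coeff_eleven_squaredLinePoly (e₁ e₂ e₃ : K) :
    (squaredLinePoly e₁ e₂ e₃).coeff 11 = -(6 * e₁) := by
  rw [squaredLinePoly, sq_cubic_eq, coeff_mul, Finset.Nat.sum_antidiagonal_eq_sum_range_succ_mk]
  simp only [coeff_add, coeff_sub, coeff_C_mul, coeff_X, coeff_C, coeff_X_pow,
    Finset.sum_range_succ, Finset.sum_range_zero]
  norm_num
  ring

theorem coeff_nine_squaredLinePoly (e₁ e₂ e₃ : K) :
    (squaredLinePoly e₁ e₂ e₃).coeff 9 = -(20 * e₁ ^ 3) - 4 * e₁ * e₂ + 24 * e₃ := by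
  rw [squaredLinePoly, sq_cubic_eq, coeff_mul, Finset.Nat.sum_antidiagonal_eq_sum_range_succ_mk]
  simp only [coeff_add, coeff_sub, coeff_C_mul, coeff_X, coeff_C, coeff_X_pow,
    Finset.sum_range_succ, Finset.sum_range_zero]
  norm_num
  ring

theorem coeff_eight_squaredLinePoly (e₁ e₂ e₃ : K) :
    (squaredLinePoly e₁ e₂ e₃).coeff 8 =
      15 * e₁ ^ 4 + 16 * e₁ ^ 2 * e₂ - 10 * e₂ ^ 2 - 66 * e₁ * e₃ := by
  rw [squaredLinePoly, sq_cubic_eq, coeff_mul, Finset.Nat.sum_antidiagonal_eq_sum_range_succ_mk]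
  simp only [coeff_add, coeff_sub, coeff_C_mul, coeff_X, coeff_C, coeff_X_pow,
    Finset.sum_range_succ, Finset.sum_range_zero]
  norm_num
  ring

theorem coeff_six_squaredLinePoly (e₁ e₂ e₃ : K) :
    (squaredLinePoly e₁ e₂ e₃).coeff 6 =
      e₁ ^ 6 + 16 * e₁ ^ 4 * e₂ - 12 * e₁ ^ 2 * e₂ ^ 2 - 20 * e₂ ^ 3 - 44 * e₁ ^ 3 * e₃ +
        26 * e₁ * e₂ * e₃ - 78 * e₃ ^ 2 := by
  rw [squaredLinePoly, sq_cubic_eq, coeff_mul, Finset.Nat.sum_antidiagonal_eq_sum_range_succ_mk]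
  simp only [coeff_add, coeff_sub, coeff_C_mul, coeff_X, coeff_C, coeff_X_pow,
    Finset.sum_range_succ, Finset.sum_range_zero]
  norm_num
  ring

end LinePolynomial

section Invariants

variable {K : Type*} [CommRing K] {e₁ e₂ e₃ p₂ q₂ p₀ q₀ : K}

theorem two_mul_p₂_eq_s10 (h2 : IsRegular (2 : K)) (h3 : IsRegular (3 : K))
    (hp₂ : 12 * p₂ = (squaredLinePoly e₁ e₂ e₃).coeff 11) : 2 * p₂ = -e₁ := by
  rw [coeff_eleven_squaredLinePoly] at hp₂
  exact (h2.mul h3).left (by linear_combination hp₂)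

theorem mul_q₂_eq_s10 (hp₂ : 2 * p₂ = -e₁)
    (hq₂ : 96 * q₂ = (squaredLinePoly e₁ e₂ e₃).coeff 9 - 168 * p₂ ^ 3) :
    96 * q₂ = e₁ * (e₁ ^ 2 - 4 * e₂) + 24 * e₃ := by
  calc 96 * q₂ = (squaredLinePoly e₁ e₂ e₃).coeff 9 - 21 * (2 * p₂) ^ 3 := by
        linear_combination hq₂
    _ = e₁ * (e₁ ^ 2 - 4 * e₂) + 24 * e₃ := by
        rw [coeff_nine_squaredLinePoly, hp₂]
        ring

theorem mul_p₀_eq_s10 (h5 : IsRegular (5 : K)) (hp₂ : 2 * p₂ = -e₁)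
    (hq₂ : 96 * q₂ = e₁ * (e₁ ^ 2 - 4 * e₂) + 24 * e₃)
    (hp₀ : 480 * p₀ = (squaredLinePoly e₁ e₂ e₃).coeff 8 - 294 * p₂ ^ 4 - 528 * p₂ * q₂) :
    768 * p₀ = -(e₁ ^ 2 - 4 * e₂) ^ 2 := by
  refine h5.left ?_
  calc 5 * (768 * p₀)
      = 8 * (squaredLinePoly e₁ e₂ e₃).coeff 8 - 147 * (2 * p₂) ^ 4 -
          22 * (2 * p₂) * (96 * q₂) := by linear_combination 8 * hp₀
    _ = 5 * -(e₁ ^ 2 - 4 * e₂) ^ 2 := by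
        rw [coeff_eight_squaredLinePoly, hp₂, hq₂]
        ring

theorem mul_q₀_eq_s10 (h2 : IsRegular (2 : K)) (h3 : IsRegular (3 : K)) (h5 : IsRegular (5 : K))
    (hp₂ : 2 * p₂ = -e₁) (hq₂ : 96 * q₂ = e₁ * (e₁ ^ 2 - 4 * e₂) + 24 * e₃)
    (hp₀ : 768 * p₀ = -(e₁ ^ 2 - 4 * e₂) ^ 2)
    (hq₀ : 17280 * q₀ = (squaredLinePoly e₁ e₂ e₃).coeff 6 - 4768 * p₀ * p₂ ^ 2 - 252 * p₂ ^ 6 -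
      1200 * p₂ ^ 3 * q₂ + 1248 * q₂ ^ 2) :
    55296 * q₀ = (e₁ ^ 2 - 4 * e₂) ^ 3 := by
  refine ((h2.mul h3).mul h5).left ?_
  calc 2 * 3 * 5 * (55296 * q₀)
      = 96 * (squaredLinePoly e₁ e₂ e₃).coeff 6 - 149 * (768 * p₀) * (2 * p₂) ^ 2 -
          378 * (2 * p₂) ^ 6 - 150 * (2 * p₂) ^ 3 * (96 * q₂) + 13 * (96 * q₂) ^ 2 := by
        linear_combination 96 * hq₀
    _ = 2 * 3 * 5 * (e₁ ^ 2 - 4 * e₂) ^ 3 := by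
        rw [coeff_six_squaredLinePoly, hp₂, hq₂, hp₀]
        ring

end Invariants

theorem mul_discr_eq_of_invariants {K : Type*} [CommRing K]
    (h2 : IsRegular (2 : K)) (h3 : IsRegular (3 : K))
    {α β γ e₁ e₂ e₃ w p₂ q₂ p₀ q₀ A B C : K}
    (he₁ : e₁ = α + β + γ) (he₂ : e₂ = α * β + α * γ + β * γ) (he₃ : e₃ = α * β * γ)
    (hw : w = e₁ ^ 2 - 4 * e₂)
    (hp₂ : 2 * p₂ = -e₁) (hq₂ : 96 * q₂ = e₁ * w + 24 * e₃)
    (hp₀ : 768 * p₀ = -w ^ 2) (hq₀ : 55296 * q₀ = w ^ 3)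
    (hA : 4 * A = -(p₂ ^ 2)) (hB : 2 * B = 2 * p₀ - p₂ * q₂) (hC : 4 * C = 4 * q₀ - q₂ ^ 2) :
    4096 * (Cubic.mk 1 A B C).discr =
      (α * β * γ * ((α - β) * (α - γ) * (β - γ))) ^ 2 := by
  have sum_roots : 48 * A = -((w + 12 * α * β) + (w + 12 * α * γ) + (w + 12 * β * γ)) := by
    calc 48 * A = -3 * (2 * p₂) ^ 2 := by linear_combination 12 * hA
      _ = _ := by rw [hp₂, hw, he₂]; ring
  have sum_pairs : 48 ^ 2 * B = (w + 12 * α * β) * (w + 12 * α * γ) +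
      (w + 12 * α * β) * (w + 12 * β * γ) + (w + 12 * α * γ) * (w + 12 * β * γ) := by
    calc 48 ^ 2 * B = 3 * (768 * p₀) - 6 * (2 * p₂) * (96 * q₂) := by
          linear_combination 1152 * hB
      _ = _ := by rw [hp₀, hp₂, hq₂, hw, he₃, he₂, he₁]; ring
  have prod_roots :
      48 ^ 3 * C = -((w + 12 * α * β) * (w + 12 * α * γ) * (w + 12 * β * γ)) := by
    calc 48 ^ 3 * C = 2 * (55296 * q₀) - 3 * (96 * q₂) ^ 2 := by linear_combination 27648 * hC
      _ = _ := by rw [hq₀, hq₂, hw, he₃, he₂, he₁]; ring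
  have scaled_discr := pow_six_mul_discr_of_scaled_roots sum_roots sum_pairs prod_roots
  refine (((h2.pow 2).mul h3).pow 6).left ?_
  linear_combination scaled_discr

theorem stmt_10_general
    {K : Type*} [CommRing K]
    (h2 : IsRegular (2 : K)) (h3 : IsRegular (3 : K)) (h5 : IsRegular (5 : K)) (α β γ : K)
    (ε : ℕ → K) (hε : ∀ m ≤ 27, ε m = (linePoly α β γ).coeff (27 - m))
    (p₂ p₁ q₂ p₀ q₀ : K)
    (hp₂ : 12 * p₂ = ε 2)
    (hp₁ : 48 * p₁ = ε 5)
    (hq₂ : 96 * q₂ = ε 6 - 168 * p₂ ^ 3)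
    (hp₀ : 480 * p₀ = ε 8 - 294 * p₂ ^ 4 - 528 * p₂ * q₂)
    (hq₀ : 17280 * q₀ = ε 12 - 608 * p₁ ^ 2 * p₂ - 4768 * p₀ * p₂ ^ 2 - 252 * p₂ ^ 6 -
      1200 * p₂ ^ 3 * q₂ + 1248 * q₂ ^ 2)
    (A B C : K)
    (hA : 4 * A = -(p₂ ^ 2))
    (hB : 2 * B = 2 * p₀ - p₂ * q₂)
    (hC : 4 * C = 4 * q₀ - q₂ ^ 2) :
    4096 * (Cubic.mk 1 A B C).discr =
      (α * β * γ * ((α - β) * (α - γ) * (β - γ))) ^ 2 := by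
  have ε_even (k : ℕ) (hk : k ≤ 12) : ε (24 - 2 * k) =
      (squaredLinePoly (α + β + γ) (α * β + α * γ + β * γ) (α * β * γ)).coeff k := by
    rw [hε _ (by lia), ← coeff_linePoly_two_mul_add_three]
    congr 1
    lia
  have p₁_eq : p₁ = 0 := by
    rw [hε 5 (by norm_num), coeff_linePoly_of_even _ _ _ (by decide)] at hp₁
    exact ((h2.pow 4).mul h3).left (by linear_combination hp₁)
  rw [ε_even 11 (by norm_num)] at hp₂
  rw [ε_even 9 (by norm_num)] at hq₂
  rw [ε_even 8 (by norm_num)] at hp₀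
  rw [ε_even 6 (by norm_num), p₁_eq, zero_pow two_ne_zero, mul_zero, zero_mul, sub_zero] at hq₀
  have p₂_eq := two_mul_p₂_eq_s10 h2 h3 hp₂
  have q₂_eq := mul_q₂_eq_s10 p₂_eq hq₂
  have p₀_eq := mul_p₀_eq_s10 h5 p₂_eq q₂_eq hp₀
  have q₀_eq := mul_q₀_eq_s10 h2 h3 h5 p₂_eq q₂_eq p₀_eq hq₀
  exact mul_discr_eq_of_invariants h2 h3 rfl rfl rfl rfl p₂_eq q₂_eq p₀_eq q₀_eq hA hB hC

/-- Even case: the discriminant of the monic cubic `x³ − (p₂²/4)x² + (p₀ − p₂q₂/2)x + (q₀ − q₂²/4)`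
over `R[u]` equals `81u²(u−1)²(u−9)²/64`. Here `A = −p₂²/4`, `B = p₀ − p₂q₂/2`, `C = q₀ − q₂²/4`. -/
theorem stmt_10
    {R : Type*} [CommRing R]
    (h2 : IsUnit (2 : R)) (h3 : IsUnit (3 : R)) (h5 : IsUnit (5 : R)) (h7 : IsUnit (7 : R))
    (Q : Polynomial (Polynomial R))
    (hQ : Q = X ^ 3 * (X ^ 2 - 1) ^ 2 * (X ^ 2 - 4) * (X ^ 2 - 9) ^ 2 * (X ^ 2 - 16) *
      (X ^ 2 - C X) ^ 2 *
      (X ^ 4 - (2 + 2 * C X) * X ^ 2 + (1 - C X) ^ 2) *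
      (X ^ 4 - (18 + 2 * C X) * X ^ 2 + (9 - C X) ^ 2))
    (ε : ℕ → Polynomial R) (hε : ∀ m ≤ 27, ε m = Q.coeff (27 - m))
    (p₂ p₁ q₂ p₀ q₁ q₀ : Polynomial R)
    (hp₂ : 12 * p₂ = ε 2)
    (hp₁ : 48 * p₁ = ε 5)
    (hq₂ : 96 * q₂ = ε 6 - 168 * p₂ ^ 3)
    (hp₀ : 480 * p₀ = ε 8 - 294 * p₂ ^ 4 - 528 * p₂ * q₂)
    (hq₁ : 1344 * q₁ = ε 9 - 1008 * p₁ * p₂ ^ 2)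
    (hq₀ : 17280 * q₀ = ε 12 - 608 * p₁ ^ 2 * p₂ - 4768 * p₀ * p₂ ^ 2 - 252 * p₂ ^ 6 -
      1200 * p₂ ^ 3 * q₂ + 1248 * q₂ ^ 2)
    (A B C : Polynomial R)
    (hA : 4 * A = -(p₂ ^ 2))
    (hB : 2 * B = 2 * p₀ - p₂ * q₂)
    (hC : 4 * C = 4 * q₀ - q₂ ^ 2)
    : 64 * (18 * A * B * C - 4 * A ^ 3 * C + A ^ 2 * B ^ 2 - 4 * B ^ 3 - 27 * C ^ 2) =
      81 * X ^ 2 * (X - 1) ^ 2 * (X - 9) ^ 2 := by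
  have regular {n : ℕ} [n.AtLeastTwo] (hn : IsUnit (OfNat.ofNat n : R)) :
      IsRegular (OfNat.ofNat n : R[X]) := by
    simpa only [map_ofNat] using (hn.map Polynomial.C).isRegular
  have Q_eq : Q = linePoly 1 9 X := by
    simp only [hQ, linePoly, map_add, map_sub, map_mul, map_pow, map_one, map_ofNat]
    ring
  have discr_eq := stmt_10_general (regular h2) (regular h3) (regular h5) 1 9 X ε (Q_eq ▸ hε)
    p₂ p₁ q₂ p₀ q₀ hp₂ hp₁ hq₂ hp₀ hq₀ A B C hA hB hC
  rw [Cubic.discr] at discr_eq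
  exact ((regular h2).pow 6).left (by linear_combination discr_eq)
end

section
/- With the notation of the odd-case construction: the c₄-invariant of the Weierstrass curve y² = x³ + p₀x + q₀ over R[u], namely −48p₀, equals 81(u−1)²(u−9)²/16 in R[u]. -/
open Polynomial

/-!
Eliminating `p₂` and `q₂` from the relations for `ε₂`, `ε₆`, `ε₈` gives
`720 · 16 · (-48 p₀) = -(1152 ε₈ - 528 ε₂ ε₆ + 35 ε₂⁴)`, so only three coefficients of `Q` matter.
Since `Q = S³ F(S²)`, they are the coefficients of `T¹¹`, `T⁹` and `T⁸` in `F(T)`. The degree 12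
polynomial `F` is the product of its part homogeneous in `(T, u)` and its part with roots
`(3 ± c√u)²`, `c = 0, 1, 2`. Both have degree 6, and a Cauchy product counted from the top degree
gives the three coefficients.
-/

theorem coeff_mul_add_sub {R : Type*} [Semiring R] {f g : R[X]} {m n k : ℕ}
    (hf : f.natDegree ≤ m) (hg : g.natDegree ≤ n) (hkm : k ≤ m) (hkn : k ≤ n) :
    (f * g).coeff (m + n - k) =
      ∑ ij ∈ Finset.HasAntidiagonal.antidiagonal k, f.coeff (m - ij.1) * g.coeff (n - ij.2) := by
  rw [← revAt_le (by lia : k ≤ m + n), ← coeff_reflect, reflect_mul f g hf hg, coeff_mul]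
  refine Finset.sum_congr rfl fun ij hij => ?_
  rw [Finset.HasAntidiagonal.mem_antidiagonal] at hij
  rw [coeff_reflect, coeff_reflect, revAt_le (by lia), revAt_le (by lia)]

section OddCase

variable {A : Type*} [CommRing A]

theorem mul_c₄_eq_of_coeff_relations {ε₂ ε₆ ε₈ p₂ q₂ p₀ : A} (hp₂ : 12 * p₂ = ε₂)
    (hq₂ : 96 * q₂ = ε₆ - 168 * p₂ ^ 3)
    (hp₀ : 480 * p₀ = ε₈ - 294 * p₂ ^ 4 - 528 * p₂ * q₂) :
    720 * (16 * (-48 * p₀)) = -(1152 * ε₈ - 528 * ε₂ * ε₆ + 35 * ε₂ ^ 4) := by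
  subst hp₂
  linear_combination -1152 * hp₀ + 6336 * p₂ * hq₂

/-- The degree 27 polynomial `Q(u, S)` of the odd case, as a polynomial in `S = X`, for `u` in an
arbitrary ring. -/
noncomputable def oddCasePolynomial (u : A) : A[X] :=
  X ^ 3 * (X ^ 2 - 9) ^ 2 * (X ^ 2 - C u) ^ 3 * (X ^ 2 - 4 * C u) ^ 2 * (X ^ 2 - 9 * C u) *
    (X ^ 4 - (18 + 2 * C u) * X ^ 2 + (9 - C u) ^ 2) *
    (X ^ 4 - (18 + 8 * C u) * X ^ 2 + (9 - 4 * C u) ^ 2)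

/-- The part of `oddCasePolynomial u` with roots `S = ±c√u`, `c = 1, 2, 3`, as a polynomial in
`T = S²`. -/
noncomputable def homogeneousFactor (u : A) : A[X] :=
  (X - C u) ^ 3 * (X - 4 * C u) ^ 2 * (X - 9 * C u)

/-- The part of `oddCasePolynomial u` with roots `S = ±3 ± c√u`, `c = 0, 1, 2`, as a polynomial in
`T = S²`. -/
noncomputable def shiftedFactor (u : A) : A[X] :=
  (X - 9) ^ 2 * (X ^ 2 - (18 + 2 * C u) * X + (9 - C u) ^ 2) *
    (X ^ 2 - (18 + 8 * C u) * X + (9 - 4 * C u) ^ 2)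

theorem oddCasePolynomial_eq_X_pow_mul_expand (u : A) :
    oddCasePolynomial u = X ^ 3 * expand A 2 (homogeneousFactor u * shiftedFactor u) := by
  simp only [oddCasePolynomial, homogeneousFactor, shiftedFactor, map_mul, map_pow, map_sub,
    map_add, expand_X, expand_C, map_ofNat]
  ring

theorem homogeneousFactor_eq (u : A) :
    homogeneousFactor u = X ^ 6 + C (-20 * u) * X ^ 5 + C (142 * u ^ 2) * X ^ 4 +
      C (-460 * u ^ 3) * X ^ 3 + C (713 * u ^ 4) * X ^ 2 + C (-520 * u ^ 5) * X +
      C (144 * u ^ 6) := by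
  simp only [homogeneousFactor, map_mul, map_pow, map_neg, map_ofNat]
  ring

theorem shiftedFactor_eq (u : A) :
    shiftedFactor u = X ^ 6 + C (-54 - 10 * u) * X ^ 5 + C (1215 + 270 * u + 33 * u ^ 2) * X ^ 4 +
      C (-14580 - 1620 * u - 612 * u ^ 2 - 40 * u ^ 3) * X ^ 3 +
      C (98415 - 14580 * u + 5670 * u ^ 2 + 360 * u ^ 3 + 16 * u ^ 4) * X ^ 2 +
      C (-354294 + 196830 * u - 49572 * u ^ 2 + 3240 * u ^ 3 - 288 * u ^ 4) * X +
      C (81 * (81 - 45 * u + 4 * u ^ 2) ^ 2) := by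
  simp only [shiftedFactor, map_mul, map_pow, map_neg, map_ofNat, map_sub, map_add]
  ring

theorem topCoeffs_homogeneousFactor (u : A) :
    (homogeneousFactor u).coeff 6 = 1 ∧
    (homogeneousFactor u).coeff 5 = -20 * u ∧
    (homogeneousFactor u).coeff 4 = 142 * u ^ 2 ∧
    (homogeneousFactor u).coeff 3 = -460 * u ^ 3 ∧
    (homogeneousFactor u).coeff 2 = 713 * u ^ 4 := by
  -- The coefficients must stay inside `C`: split up, they no longer match the `coeff` lemmas.
  simp [homogeneousFactor_eq, -map_mul, -map_pow, -map_neg]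

theorem topCoeffs_shiftedFactor (u : A) :
    (shiftedFactor u).coeff 6 = 1 ∧
    (shiftedFactor u).coeff 5 = -54 - 10 * u ∧
    (shiftedFactor u).coeff 4 = 1215 + 270 * u + 33 * u ^ 2 ∧
    (shiftedFactor u).coeff 3 = -14580 - 1620 * u - 612 * u ^ 2 - 40 * u ^ 3 ∧
    (shiftedFactor u).coeff 2 =
      98415 - 14580 * u + 5670 * u ^ 2 + 360 * u ^ 3 + 16 * u ^ 4 := by
  simp [shiftedFactor_eq, -map_mul, -map_pow, -map_add, -map_sub, -map_neg]

theorem natDegree_homogeneousFactor_le (u : A) : (homogeneousFactor u).natDegree ≤ 6 := by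
  rw [homogeneousFactor_eq]
  compute_degree

theorem natDegree_shiftedFactor_le (u : A) : (shiftedFactor u).natDegree ≤ 6 := by
  rw [shiftedFactor_eq]
  compute_degree

theorem coeff_oddCasePolynomial (u : A) {k : ℕ} (hk : k ≤ 6) :
    (oddCasePolynomial u).coeff (27 - 2 * k) =
      ∑ ij ∈ Finset.HasAntidiagonal.antidiagonal k,
        (homogeneousFactor u).coeff (6 - ij.1) * (shiftedFactor u).coeff (6 - ij.2) := by
  rw [show 27 - 2 * k = (6 + 6 - k) * 2 + 3 by lia, oddCasePolynomial_eq_X_pow_mul_expand,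
    coeff_X_pow_mul, coeff_expand_mul two_pos, coeff_mul_add_sub
      (natDegree_homogeneousFactor_le u) (natDegree_shiftedFactor_le u) hk hk]

theorem topCoeffs_oddCasePolynomial (u : A) :
    (oddCasePolynomial u).coeff 25 = -54 - 30 * u ∧
    (oddCasePolynomial u).coeff 21 = -14580 - 25920 * u - 13680 * u ^ 2 - 2580 * u ^ 3 ∧
    (oddCasePolynomial u).coeff 19 =
      98415 + 277020 * u + 210600 * u ^ 2 + 75780 * u ^ 3 + 10815 * u ^ 4 := by
  obtain ⟨hom₆, hom₅, hom₄, hom₃, hom₂⟩ := topCoeffs_homogeneousFactor u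
  obtain ⟨shift₆, shift₅, shift₄, shift₃, shift₂⟩ := topCoeffs_shiftedFactor u
  refine ⟨(coeff_oddCasePolynomial u (k := 1) (by simp)).trans ?_,
    (coeff_oddCasePolynomial u (k := 3) (by simp)).trans ?_,
    (coeff_oddCasePolynomial u (k := 4) (by simp)).trans ?_⟩ <;>
  · simp only [Finset.Nat.sum_antidiagonal_eq_sum_range_succ_mk, Finset.sum_range_succ,
      Finset.sum_range_zero, Nat.reduceSub, hom₆, hom₅, hom₄, hom₃, hom₂,
      shift₆, shift₅, shift₄, shift₃, shift₂]
    ring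

theorem stmt_13_general (h2 : IsRegular (2 : A)) (h3 : IsRegular (3 : A)) (h5 : IsRegular (5 : A))
    (u : A) (ε : ℕ → A) (hε : ∀ m ≤ 27, ε m = (oddCasePolynomial u).coeff (27 - m))
    {p₂ q₂ p₀ : A} (hp₂ : 12 * p₂ = ε 2) (hq₂ : 96 * q₂ = ε 6 - 168 * p₂ ^ 3)
    (hp₀ : 480 * p₀ = ε 8 - 294 * p₂ ^ 4 - 528 * p₂ * q₂) :
    16 * (-48 * p₀) = 81 * (u - 1) ^ 2 * (u - 9) ^ 2 := by
  have regular_720 : IsRegular (720 : A) := by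
    rw [show (720 : A) = 2 ^ 4 * 3 ^ 2 * 5 by norm_num]
    exact ((h2.pow 4).mul (h3.pow 2)).mul h5
  obtain ⟨coeff₂₅, coeff₂₁, coeff₁₉⟩ := topCoeffs_oddCasePolynomial u
  apply regular_720.left
  calc 720 * (16 * (-48 * p₀))
      = -(1152 * ε 8 - 528 * ε 2 * ε 6 + 35 * ε 2 ^ 4) :=
        mul_c₄_eq_of_coeff_relations hp₂ hq₂ hp₀
    _ = 720 * (81 * (u - 1) ^ 2 * (u - 9) ^ 2) := by
        rw [hε 2 (by simp), hε 6 (by simp), hε 8 (by simp), coeff₂₅, coeff₂₁, coeff₁₉]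
        ring

end OddCase

/-- Odd case: the `c₄`-invariant `−48p₀` of `y² = x³ + p₀x + q₀` equals `81(u−1)²(u−9)²/16` in `R[u]`. -/
theorem stmt_13
    {R : Type*} [CommRing R]
    (h2 : IsUnit (2 : R)) (h3 : IsUnit (3 : R)) (h5 : IsUnit (5 : R)) (h7 : IsUnit (7 : R))
    (Q : Polynomial (Polynomial R))
    (hQ : Q = X ^ 3 * (X ^ 2 - 9) ^ 2 * (X ^ 2 - C X) ^ 3 * (X ^ 2 - 4 * C X) ^ 2 * (X ^ 2 - 9 * C X) *
      
      (X ^ 4 - (18 + 2 * C X) * X ^ 2 + (9 - C X) ^ 2) *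
      (X ^ 4 - (18 + 8 * C X) * X ^ 2 + (9 - 4 * C X) ^ 2))
    (ε : ℕ → Polynomial R) (hε : ∀ m ≤ 27, ε m = Q.coeff (27 - m))
    (p₂ p₁ q₂ p₀ q₁ q₀ : Polynomial R)
    (hp₂ : 12 * p₂ = ε 2)
    (hp₁ : 48 * p₁ = ε 5)
    (hq₂ : 96 * q₂ = ε 6 - 168 * p₂ ^ 3)
    (hp₀ : 480 * p₀ = ε 8 - 294 * p₂ ^ 4 - 528 * p₂ * q₂)
    (hq₁ : 1344 * q₁ = ε 9 - 1008 * p₁ * p₂ ^ 2)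
    (hq₀ : 17280 * q₀ = ε 12 - 608 * p₁ ^ 2 * p₂ - 4768 * p₀ * p₂ ^ 2 - 252 * p₂ ^ 6 -
      1200 * p₂ ^ 3 * q₂ + 1248 * q₂ ^ 2)
    : 16 * (-48 * p₀) = 81 * (X - 1) ^ 2 * (X - 9) ^ 2 := by
  subst hQ
  exact stmt_13_general (isUnit_C.mpr h2).isRegular (isUnit_C.mpr h3).isRegular
    (isUnit_C.mpr h5).isRegular X ε hε hp₂ hq₂ hp₀
end
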